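/- Let J be a Jordan algebra over a field of characteristic zero and let q ∈ J. Define the q-isotope product on J by u ·_q v = (uq)v + u(qv) - (uv)q. If q is invertible (in particular if q² = 1), then J with the product ·_q is again a Jordan algebra. -/

import Mathlib

/-- The `q`-isotope product `u ·_q v = (uq)v + u(qv) - (uv)q`. -/
def isoMul {J : Type*} [NonUnitalNonAssocCommRing J] (q u v : J) : J :=
  (u * q) * v + u * (q * v) - (u * v) * q

section helpers
variable {J : Type*} [NonUnitalNonAssocCommRing J] [IsCommJordan J]

/-- Linearized Jordan identity. -/
theorem jlin (h2 : ∀ x : J, x + x = 0 → x = 0) (a b c d : J) :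
    a * ((b * c) * d) + b * ((c * a) * d) + c * ((a * b) * d)
      = (b * c) * (a * d) + (c * a) * (b * d) + (a * b) * (c * d) := by
  have h := two_nsmul_lie_lmul_lmul_add_add_eq_zero a b c
  have h' := congrArg (fun f : AddMonoid.End J => f d) h
  simp only [Ring.lie_def, two_nsmul] at h'
  have h3 : (a * ((b * c) * d) - (b * c) * (a * d)) + (b * ((c * a) * d) - (c * a) * (b * d))
      + (c * ((a * b) * d) - (a * b) * (c * d)) = 0 := h2 _ h'
  rw [← sub_eq_zero, ← h3]
  abel

/-- Commutators of multiplications are derivations. -/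
theorem jder (h2 : ∀ x : J, x + x = 0 → x = 0) (a b c d : J) :
    a * (b * (c * d)) - b * (a * (c * d))
      = (a * (b * c) - b * (a * c)) * d + c * (a * (b * d) - b * (a * d)) := by
  have h1 := jlin h2 b c d a
  have h3 := jlin h2 a c d b
  simp only [mul_sub, sub_mul]
  have e1 : (c * d) * a = a * (c * d) := mul_comm _ _
  have e2 : (c * d) * b = b * (c * d) := mul_comm _ _
  have e3 : (d * b) * a = a * (b * d) := by rw [mul_comm, mul_comm d]
  have e4 : (b * c) * a = a * (b * c) := mul_comm _ _
  have e5 : (d * a) * b = b * (a * d) := by rw [mul_comm, mul_comm d]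
  have e6 : (a * c) * b = b * (a * c) := mul_comm _ _
  have e7 : (c * d) * (b * a) = (c * d) * (a * b) := by rw [mul_comm b a]
  have e8 : (d * b) * (c * a) = (a * c) * (d * b) := by rw [mul_comm, mul_comm c]
  have e9 : (b * c) * (d * a) = (d * a) * (c * b) := by rw [mul_comm, mul_comm c]
  rw [e1, e3, e4, e7, e8, e9] at h1
  rw [e2, e5, e6] at h3
  rw [mul_comm (a * (b * c)) d, mul_comm (b * (a * c)) d]
  have h4 : b * (a * (c * d)) + c * (a * (b * d)) + d * (a * (b * c))
      = a * (b * (c * d)) + c * (b * (a * d)) + d * (b * (a * c)) := by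
    rw [h1, h3]; abel
  rw [← sub_eq_zero] at h4 ⊢
  rw [← neg_eq_zero, ← h4]
  abel

/-- Triple product `{x y z}`, additive in the operator form. -/
def tp (x y z : J) : J := (x * y) * z + (x * (y * z) - y * (x * z))

theorem tp_mul (h2 : ∀ x : J, x + x = 0 → x = 0) (c x y z : J) :
    c * tp x y z = tp (c * x) y z - tp x (c * y) z + tp x y (c * z) := by
  have h1 := jlin h2 c x y z
  have h3 := jder h2 x y c z
  unfold tp
  simp only [mul_add, mul_sub, sub_mul] at h3 ⊢
  rw [mul_comm y c] at h1 h3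
  rw [mul_comm x c] at h3
  rw [mul_comm (c * x) y]
  rw [← sub_eq_zero] at h1 h3 ⊢
  have h0 : (0 : J) = 0 - 0 := by simp
  rw [h0]
  nth_rewrite 1 [← h1]
  nth_rewrite 1 [← h3]
  abel

/-- The derivation `[L_a, L_b]`. -/
def dd (a b z : J) : J := a * (b * z) - b * (a * z)

theorem dd_mul (h2 : ∀ x : J, x + x = 0 → x = 0) (a b c d : J) :
    dd a b (c * d) = dd a b c * d + c * dd a b d := jder h2 a b c d

theorem dd_add (a b c d : J) : dd a b (c + d) = dd a b c + dd a b d := by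
  simp only [dd, mul_add]; abel

theorem dd_sub (a b c d : J) : dd a b (c - d) = dd a b c - dd a b d := by
  simp only [dd, mul_sub]; abel

theorem tp_dd (h2 : ∀ x : J, x + x = 0 → x = 0) (a b x y z : J) :
    dd a b (tp x y z) = tp (dd a b x) y z + tp x (dd a b y) z + tp x y (dd a b z) := by
  simp only [tp, dd_add, dd_sub, dd_mul h2, mul_add, add_mul]
  abel

theorem tp_five (h2 : ∀ x : J, x + x = 0 → x = 0) (a b x y z : J) :
    tp a b (tp x y z) = tp (tp a b x) y z - tp x (tp b a y) z + tp x y (tp a b z) := by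
  have k : ∀ w, tp a b w = (a * b) * w + dd a b w := fun w => rfl
  have k' : tp b a y = (a * b) * y - dd a b y := by
    rw [tp, dd, mul_comm b a]; abel
  have l1 : ∀ p r, tp (p + r) y z = tp p y z + tp r y z := by
    intro p r; simp only [tp, mul_add, add_mul]; abel
  have l2 : ∀ p r, tp x (p - r) z = tp x p z - tp x r z := by
    intro p r; simp only [tp, mul_sub, sub_mul]; abel
  have l3 : ∀ p r, tp x y (p + r) = tp x y p + tp x y r := by
    intro p r; simp only [tp, mul_add]; abel
  rw [k, k, k, k', l1, l2, l3, tp_dd h2, tp_mul h2]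
  abel

theorem tp_symm (x y z : J) : tp x y z = tp z y x := by
  unfold tp
  rw [mul_comm (x * y) z, mul_comm (z * y) x, mul_comm x y, mul_comm z y, mul_comm z x,
    mul_comm y z, mul_comm y x]
  abel

theorem tp_jordan (h2 : ∀ x : J, x + x = 0 → x = 0) (h3 : ∀ x : J, x + x + x = 0 → x = 0)
    (u q v : J) :
    tp u q (tp (tp u q u) q v) = tp (tp u q u) q (tp u q v) := by
  have p1 : ∀ w, tp (tp u q u) q w = tp u (tp q u q) w := by
    intro w
    have := tp_five h2 u q u q w
    rw [← sub_eq_zero, ← neg_eq_zero, ← sub_eq_zero.mpr this]; abel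
  have p2 : ∀ w, tp (tp q u q) u w = tp q (tp u q u) w := by
    intro w
    have := tp_five h2 q u q u w
    rw [← sub_eq_zero, ← neg_eq_zero, ← sub_eq_zero.mpr this]; abel
  have a1 := tp_five h2 u q (tp u q u) q v
  have a2 := tp_five h2 u q u (tp q u q) v
  have a3 := tp_five h2 (tp u q u) q u q v
  have e1 : tp (tp u q u) q u = tp u q (tp u q u) := tp_symm _ _ _
  have e2 : tp q (tp u q u) q = tp q u (tp q u q) := by rw [← p2, tp_symm]
  rw [← p1 v, ← p1 (tp u q v)] at a2
  rw [e1, e2] at a3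
  rw [← sub_eq_zero]
  apply h3
  have b1 := sub_eq_zero.mpr a1
  have b2 := sub_eq_zero.mpr a2
  have b3 := sub_eq_zero.mpr a3
  have : (0 : J) = (0 + 0) - 0 := by simp
  rw [this]
  nth_rewrite 1 [← b1]
  nth_rewrite 1 [← b2]
  nth_rewrite 1 [← b3]
  abel

theorem isoMul_eq_tp (q u v : J) : isoMul q u v = tp u q v := by
  unfold isoMul tp
  rw [mul_comm (u * v) q]; abel

end helpers

/-- If `q` is an invertible element of a unital Jordan algebra `J` over a field of
characteristic zero (invertibility meaning `∃ r, qr = 1 ∧ q²r = q`; in particular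
this holds if `q² = 1`), then `J` with the `q`-isotope product is again a Jordan
algebra: the product is commutative and satisfies the Jordan identity. -/
theorem isotope_isJordan (F : Type*) [Field F] [CharZero F]
    (J : Type*) [NonUnitalNonAssocCommRing J] [Module F J]
    [IsScalarTower F J J] [SMulCommClass F J J] [IsCommJordan J]
    (e : J) (he : ∀ x, e * x = x)
    (q : J) (hq : ∃ r, q * r = e ∧ (q * q) * r = q) :
    (∀ u v, isoMul q u v = isoMul q v u) ∧
    (∀ u v, isoMul q (isoMul q (isoMul q u u) v) u
      = isoMul q (isoMul q u u) (isoMul q v u)) := by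
  have h2 : ∀ x : J, x + x = 0 → x = 0 := by
    intro x hx
    have : (2 : F) • x = 0 := by rw [two_smul, hx]
    exact (smul_eq_zero.mp this).resolve_left two_ne_zero
  have h3 : ∀ x : J, x + x + x = 0 → x = 0 := by
    intro x hx
    have : (3 : F) • x = 0 := by
      rw [show (3 : F) = 1 + 1 + 1 by norm_num, add_smul, add_smul, one_smul, hx]
    exact (smul_eq_zero.mp this).resolve_left three_ne_zero
  refine ⟨fun u v => ?_, fun u v => ?_⟩
  · rw [isoMul_eq_tp, isoMul_eq_tp, tp_symm]
  · simp only [isoMul_eq_tp]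
    rw [tp_symm _ q u, tp_jordan h2 h3, tp_symm v q u]
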